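/- (Quadratic-term reduction in the proof of Theorem B.) Let σ be a smooth symmetric (0,2)-tensor field on ℝ³ with compact support which is trace-free (Σ_i σ_{ii}(x) = 0 for all x) and divergence-free (Σ_i ∂_i σ_{ij} = 0 everywhere for j = 1,2,3). Then for each p = 1,2,3, ∫_{ℝ³} x_p Σ_{i,j,l} [ − σ_{il}(x) (∂_j ∂_j σ_{il})(x) − (3/4) ((∂_l σ_{ij})(x))² + (1/2) (∂_l σ_{ij})(x) (∂_j σ_{il})(x) ] dx = (1/4) ∫_{ℝ³} x_p Σ_{i,j,l} ((∂_l σ_{ij})(x))² dx. -/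

import Mathlib

/-!
The identity is integration by parts for compactly supported smooth functions, weighted by the
coordinate `x p` (`ibp_coord`): moving `∂_k` across costs an extra term without weight, present
only for `k = p`. Summing over `i, j, l`:

* in `-σ_il ∂_j ∂_j σ_il` the weighted part gives `+|∂σ|²`, while the unweighted part
  `∫ σ_il ∂_p σ_il` vanishes, since `σ_il ∂_p σ_il` is half the derivative of `σ_il²`;
* in `∂_l σ_ij ∂_j σ_il`, moving `∂_l` leaves, up to sign, `x_p σ_ij ∂_j (∑ l, ∂_l σ_il) = 0` and
  `∑ i j, ∫ σ_ij ∂_j σ_ip`, and a second integration by parts turns the latter into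
  `-∑ i, ∫ (∑ j, ∂_j σ_ij) σ_ip = 0`.

What remains is the coefficient `1 - 3/4 = 1/4`. The lemmas on the two terms are
`integral_laplacian_term` and `sum_integral_cross_term`.
-/

open MeasureTheory

/-- The `i`-th coordinate partial derivative of a function on `ℝ³`. -/
noncomputable def pd (i : Fin 3) (f : (Fin 3 → ℝ) → ℝ) (x : Fin 3 → ℝ) : ℝ :=
  fderiv ℝ f x (Pi.single i 1)

/-- Smooth real functions on `ℝ³` with compact support. -/
def IsTest (f : (Fin 3 → ℝ) → ℝ) : Prop :=
  ContDiff ℝ (⊤ : ℕ∞) f ∧ HasCompactSupport f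

namespace IsTest

variable {f g : (Fin 3 → ℝ) → ℝ}

lemma differentiable (hf : IsTest f) : Differentiable ℝ f :=
  hf.1.differentiable (by simp)

lemma pd (hf : IsTest f) (k : Fin 3) : IsTest (pd k f) := by
  refine ⟨?_, hf.2.fderiv_apply (𝕜 := ℝ) (v := Pi.single k 1)⟩
  exact (hf.1.fderiv_right (m := (⊤ : ℕ∞)) (by simp)).clm_apply contDiff_const

lemma mul (hf : IsTest f) (hg : IsTest g) : IsTest (fun x => f x * g x) :=
  ⟨hf.1.mul hg.1, hf.2.mul_right⟩

lemma coord_mul (hf : IsTest f) (p : Fin 3) : IsTest (fun x => x p * f x) :=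
  ⟨(contDiff_apply ℝ ℝ p).mul hf.1, hf.2.mul_left⟩

lemma integrable (hf : IsTest f) : Integrable f :=
  hf.1.continuous.integrable_of_hasCompactSupport hf.2

end IsTest

lemma ibp {f g : (Fin 3 → ℝ) → ℝ} (hf : IsTest f) (hg : IsTest g) (k : Fin 3) :
    ∫ x, f x * pd k g x = - ∫ x, pd k f x * g x :=
  integral_mul_fderiv_eq_neg_fderiv_mul_of_integrable
    ((hf.pd k).mul hg).integrable (hf.mul (hg.pd k)).integrable (hf.mul hg).integrable
    (fun x _ => hf.differentiable x) (fun x _ => hg.differentiable x)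

lemma pd_coord_mul {f : (Fin 3 → ℝ) → ℝ} (hf : IsTest f) (p k : Fin 3) (x : Fin 3 → ℝ) :
    pd k (fun y => y p * f y) x = x p * pd k f x + (if k = p then f x else 0) := by
  have h1 : HasFDerivAt (fun y : Fin 3 → ℝ => y p)
      (ContinuousLinearMap.proj (R := ℝ) (φ := fun _ : Fin 3 => ℝ) p) x :=
    (ContinuousLinearMap.proj (R := ℝ) (φ := fun _ : Fin 3 => ℝ) p).hasFDerivAt
  have h := (h1.fun_mul (hf.differentiable x).hasFDerivAt).fderiv
  unfold pd
  rw [h]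
  by_cases hkp : k = p
  · simp [hkp]
  · simp [hkp, Ne.symm hkp]

/-- Integration by parts against the weight `x p`. -/
lemma ibp_coord {f g : (Fin 3 → ℝ) → ℝ} (hf : IsTest f) (hg : IsTest g) (p k : Fin 3) :
    ∫ x, x p * (f x * pd k g x) =
      - (∫ x, x p * (pd k f x * g x)) - (if k = p then ∫ x, f x * g x else 0) := by
  have h := ibp (hf.coord_mul p) hg k
  simp only [pd_coord_mul hf, mul_assoc] at h
  rw [h]
  by_cases hkp : k = p
  · simp only [hkp, if_true, add_mul, mul_assoc]
    rw [integral_add (((hf.pd p).mul hg).coord_mul p).integrable (hf.mul hg).integrable]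
    ring
  · simp [hkp, mul_assoc]

lemma integral_mul_pd_self {f : (Fin 3 → ℝ) → ℝ} (hf : IsTest f) (k : Fin 3) :
    ∫ x, f x * pd k f x = 0 := by
  have h := ibp hf hf k
  simp only [mul_comm (pd k f _)] at h
  linarith

lemma integral_laplacian_term {f : (Fin 3 → ℝ) → ℝ} (hf : IsTest f) (p k : Fin 3) :
    ∫ x, x p * (f x * pd k (pd k f) x) = - ∫ x, x p * (pd k f x) ^ 2 := by
  rw [ibp_coord hf (hf.pd k), integral_mul_pd_self hf]
  simp [sq]

/-- Partial derivatives commute. -/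
lemma pd_comm {f : (Fin 3 → ℝ) → ℝ} (hf : IsTest f) (j k : Fin 3) (x : Fin 3 → ℝ) :
    pd j (pd k f) x = pd k (pd j f) x := by
  have hd : DifferentiableAt ℝ (fderiv ℝ f) x :=
    (hf.1.fderiv_right (m := (⊤ : ℕ∞)) (by simp)).differentiable (by simp) x
  have key : ∀ a b : Fin 3, pd a (pd b f) x =
      fderiv ℝ (fderiv ℝ f) x (Pi.single a 1) (Pi.single b 1) := by
    intro a b
    have h := hd.hasFDerivAt.clm_apply (hasFDerivAt_const (Pi.single b (1 : ℝ)) x)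
    change fderiv ℝ (fun y => fderiv ℝ f y (Pi.single b 1)) x (Pi.single a 1) = _
    rw [h.fderiv]
    simp
  rw [key, key]
  exact (hf.1.contDiffAt.isSymmSndFDerivAt
    (by rw [minSmoothness_of_isRCLikeNormedField]; exact WithTop.coe_le_coe.2 (le_top : (2 : ℕ∞) ≤ ⊤))).eq _ _

lemma sum_integral_cross_term {s : Fin 3 → Fin 3 → (Fin 3 → ℝ) → ℝ}
    (hs : ∀ i j, IsTest (s i j)) (hdiv : ∀ i x, ∑ l, pd l (s i l) x = 0) (p : Fin 3) :
    ∑ i, ∑ j, ∑ l, ∫ x, x p * (pd l (s i j) x * pd j (s i l) x) = 0 := by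
  -- The divergence-free condition, differentiated in direction `j`.
  have hdiv' : ∀ i j x, ∑ l, pd l (pd j (s i l)) x = 0 := by
    intro i j x
    have h0 : pd j (fun y => ∑ l, pd l (s i l) y) x = 0 := by
      have : (fun y => ∑ l, pd l (s i l) y) = fun _ => 0 := funext (hdiv i)
      rw [this]; simp [pd]
    have h1 : pd j (fun y => ∑ l, pd l (s i l) y) x = ∑ l, pd j (pd l (s i l)) x := by
      have h := HasFDerivAt.fun_sum (u := Finset.univ)
        fun l _ => (((hs i l).pd l).differentiable x).hasFDerivAt
      change fderiv ℝ _ x _ = _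
      rw [h.fderiv]
      simp [pd]
    rw [← h0, h1]
    exact Finset.sum_congr rfl fun l _ => pd_comm (hs i l) l j x
  have hterm : ∀ i j l, ∫ x, x p * (pd l (s i j) x * pd j (s i l) x) =
      - (∫ x, x p * (s i j x * pd l (pd j (s i l)) x))
        - (if l = p then ∫ x, s i j x * pd j (s i l) x else 0) := by
    intro i j l
    rw [ibp_coord (hs i j) ((hs i l).pd j)]
    ring
  have hA : ∀ i j, ∑ l, ∫ x, x p * (s i j x * pd l (pd j (s i l)) x) = 0 := by
    intro i j
    rw [← integral_finsetSum _ fun l _ =>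
      (((hs i j).mul (((hs i l).pd j).pd l)).coord_mul p).integrable]
    simp [← Finset.mul_sum, hdiv']
  have hB : ∀ i, ∑ j, ∫ x, s i j x * pd j (s i p) x = 0 := by
    intro i
    simp only [fun j => ibp (hs i j) (hs i p) j]
    rw [Finset.sum_neg_distrib, ← integral_finsetSum _ fun j _ =>
      (((hs i j).pd j).mul (hs i p)).integrable]
    simp [← Finset.sum_mul, hdiv]
  simp only [hterm, Finset.sum_sub_distrib, Finset.sum_neg_distrib, hA, Finset.sum_ite_eq',
    Finset.mem_univ, if_true, hB]
  simp

theorem quadratic_term_reduction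
    (σ : (Fin 3 → ℝ) → Matrix (Fin 3) (Fin 3) ℝ)
    (hσsmooth : ∀ i j, ContDiff ℝ (⊤ : ℕ∞) fun x => σ x i j)
    (hσsymm : ∀ x, (σ x).IsSymm)
    (hσsupp : ∀ i j, HasCompactSupport fun x => σ x i j)
    -- trace-free
    (htf : ∀ x, ∑ i, σ x i i = 0)
    -- divergence-free
    (hdf : ∀ j x, ∑ i, pd i (fun y => σ y i j) x = 0)
    (p : Fin 3) :
    ∫ x : Fin 3 → ℝ, x p * ∑ i, ∑ j, ∑ l,
        (- σ x i l * pd j (fun y => pd j (fun z => σ z i l) y) x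
          - (3 / 4) * (pd l (fun y => σ y i j) x) ^ 2
          + (1 / 2) * pd l (fun y => σ y i j) x * pd j (fun y => σ y i l) x)
      = (1 / 4) * ∫ x : Fin 3 → ℝ,
          x p * ∑ i, ∑ j, ∑ l, (pd l (fun y => σ y i j) x) ^ 2 := by
  obtain ⟨s, hsdef⟩ : ∃ s : Fin 3 → Fin 3 → (Fin 3 → ℝ) → ℝ, s = fun i j x => σ x i j := ⟨_, rfl⟩
  have hs : ∀ i j, IsTest (s i j) := fun i j => by
    subst hsdef; exact ⟨hσsmooth i j, hσsupp i j⟩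
  have hdiv : ∀ i x, ∑ l, pd l (s i l) x = 0 := by
    intro i x
    have hsym : ∀ l, s i l = fun y => σ y l i := by
      intro l; subst hsdef; funext y; exact (hσsymm y).apply l i
    simp only [hsym]
    exact hdf i x
  have hval : ∀ x i j, σ x i j = s i j x := fun x i j => by subst hsdef; rfl
  simp only [hval]
  have hsq : ∀ i j l, Integrable fun x : Fin 3 → ℝ => x p * (pd l (s i j) x) ^ 2 := by
    intro i j l
    simpa only [sq] using ((((hs i j).pd l).mul ((hs i j).pd l)).coord_mul p).integrable
  have hlap : ∀ i j l, Integrable fun x : Fin 3 → ℝ => x p * (s i l x * pd j (pd j (s i l)) x) :=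
    fun i j l => (((hs i l).mul (((hs i l).pd j).pd j)).coord_mul p).integrable
  have hcross : ∀ i j l,
      Integrable fun x : Fin 3 → ℝ => x p * (pd l (s i j) x * pd j (s i l) x) :=
    fun i j l => ((((hs i j).pd l).mul ((hs i l).pd j)).coord_mul p).integrable
  have hsplit : ∀ i j l (x : Fin 3 → ℝ), x p * (- s i l x * pd j (pd j (s i l)) x
        - (3 / 4) * (pd l (s i j) x) ^ 2 + (1 / 2) * pd l (s i j) x * pd j (s i l) x) =
      (-1) * (x p * (s i l x * pd j (pd j (s i l)) x)) - (3 / 4) * (x p * (pd l (s i j) x) ^ 2)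
        + (1 / 2) * (x p * (pd l (s i j) x * pd j (s i l) x)) := by
    intros; ring
  have hsub : ∀ i j l, Integrable fun x : Fin 3 → ℝ =>
      (-1) * (x p * (s i l x * pd j (pd j (s i l)) x)) - (3 / 4) * (x p * (pd l (s i j) x) ^ 2) :=
    fun i j l => ((hlap i j l).const_mul _).sub ((hsq i j l).const_mul _)
  have hint : ∀ i j l, Integrable fun x : Fin 3 → ℝ =>
      (-1) * (x p * (s i l x * pd j (pd j (s i l)) x)) - (3 / 4) * (x p * (pd l (s i j) x) ^ 2)
        + (1 / 2) * (x p * (pd l (s i j) x * pd j (s i l) x)) := fun i j l =>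
    (hsub i j l).add ((hcross i j l).const_mul _)
  have hsum : ∀ {F : Fin 3 → Fin 3 → Fin 3 → (Fin 3 → ℝ) → ℝ}, (∀ i j l, Integrable (F i j l)) →
      ∫ x, ∑ i, ∑ j, ∑ l, F i j l x = ∑ i, ∑ j, ∑ l, ∫ x, F i j l x := by
    intro F hF
    rw [integral_finsetSum _ fun i _ => integrable_finsetSum _ fun j _ =>
      integrable_finsetSum _ fun l _ => hF i j l]
    refine Finset.sum_congr rfl fun i _ => ?_
    rw [integral_finsetSum _ fun j _ => integrable_finsetSum _ fun l _ => hF i j l]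
    exact Finset.sum_congr rfl fun j _ => integral_finsetSum _ fun l _ => hF i j l
  have hterm : ∀ i j l, ∫ x : Fin 3 → ℝ,
      ((-1) * (x p * (s i l x * pd j (pd j (s i l)) x)) - (3 / 4) * (x p * (pd l (s i j) x) ^ 2)
        + (1 / 2) * (x p * (pd l (s i j) x * pd j (s i l) x))) =
      (∫ x, x p * (pd j (s i l) x) ^ 2) - (3 / 4) * (∫ x, x p * (pd l (s i j) x) ^ 2)
        + (1 / 2) * ∫ x, x p * (pd l (s i j) x * pd j (s i l) x) := by
    intro i j l
    rw [integral_add (hsub i j l) ((hcross i j l).const_mul _), integral_sub ((hlap i j l).const_mul _)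
      ((hsq i j l).const_mul _), integral_const_mul, integral_const_mul, integral_const_mul,
      integral_laplacian_term (hs i l)]
    ring
  simp only [Finset.mul_sum, hsplit]
  rw [hsum hint, hsum hsq]
  simp only [hterm, Finset.sum_add_distrib, Finset.sum_sub_distrib, ← Finset.mul_sum,
    sum_integral_cross_term hs hdiv p]
  -- The squared terms coming from the Laplacian carry the names `j` and `l` interchanged.
  have hswap : ∑ i, ∑ j, ∑ l, ∫ x : Fin 3 → ℝ, x p * (pd j (s i l) x) ^ 2 =
      ∑ i, ∑ j, ∑ l, ∫ x : Fin 3 → ℝ, x p * (pd l (s i j) x) ^ 2 :=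
    Finset.sum_congr rfl fun i _ => Finset.sum_comm
  rw [hswap]
  ring
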